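/- Consider the IQN setup and iteration. There exist positive constants ε and δ such that: if ‖x⁰ − x*‖ < ε and ‖B_i⁰ − ∇²f_i(x*)‖_{M_i} < δ for M_i = ∇²f_i(x*)^{−1/2} and every i = 1,…,n, then for every i = 1,…,n the Dennis–Moré condition holds for f_i along its update steps: writing t_0 < t_1 < t_2 < … for the iterations t at which i_t = i, and s_i^{t_k} = z_i^{t_k+1} − z_i^{t_k}, one has lim_{k→∞} ‖(B_i^{t_k} − ∇²f_i(x*)) s_i^{t_k}‖ / ‖s_i^{t_k}‖ = 0. -/

import Mathlib

open Matrix Filter RealInnerProductSpace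

noncomputable section

abbrev Vec (p : ℕ) := EuclideanSpace ℝ (Fin p)
abbrev Mat (p : ℕ) := Matrix (Fin p) (Fin p) ℝ

/-- A matrix acting on Euclidean space as a linear map. -/
def applyM {p : ℕ} (A : Mat p) (v : Vec p) : Vec p := Matrix.toEuclideanCLM (𝕜 := ℝ) A v

/-- Operator norm of a matrix induced by the Euclidean vector norm. -/
def opNorm {p : ℕ} (A : Mat p) : ℝ := ‖Matrix.toEuclideanCLM (𝕜 := ℝ) A‖

/-- Frobenius norm of a matrix. -/
def frobNorm {p : ℕ} (A : Mat p) : ℝ := Real.sqrt (∑ i, ∑ j, (A i j)^2)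

/-- Weighted matrix norm ‖A‖_M = ‖M A M‖_F. -/
def wNorm {p : ℕ} (M A : Mat p) : ℝ := frobNorm (M * A * M)

/-- Underlying function of a Euclidean vector. -/
def toFn {p : ℕ} (v : Vec p) : Fin p → ℝ := (WithLp.equiv 2 (Fin p → ℝ)) v

/-- Outer product a bᵀ. -/
def outer {p : ℕ} (a b : Vec p) : Mat p := Matrix.vecMulVec (toFn a) (toFn b)

/-- Bilinear form uᵀ B v. -/
def quadForm {p : ℕ} (B : Mat p) (u v : Vec p) : ℝ := toFn u ⬝ᵥ B.mulVec (toFn v)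

/-- Dot product aᵀ b. -/
def dotV {p : ℕ} (a b : Vec p) : ℝ := toFn a ⬝ᵥ toFn b

/-- The BFGS update  B⁺ = B + yyᵀ/(yᵀs) − B s sᵀ B/(sᵀ B s). -/
def bfgsUpdate {p : ℕ} (B : Mat p) (s y : Vec p) : Mat p :=
  B + (dotV y s)⁻¹ • outer y y - (quadForm B s s)⁻¹ • (B * outer s s * B)

/-- `H` is the Hessian (matrix of second derivatives) of `g`. -/
def HasHessian {p : ℕ} (g : Vec p → ℝ) (H : Vec p → Mat p) : Prop :=
  ∀ x, HasFDerivAt (gradient g) (Matrix.toEuclideanCLM (𝕜 := ℝ) (H x) : Vec p →L[ℝ] Vec p) x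

/-- The cyclic index `i_t = (t mod n) + 1` (0-indexed: `t mod n`). -/
def cyc {n : ℕ} (hn : 1 ≤ n) (t : ℕ) : Fin n := ⟨t % n, Nat.mod_lt t hn⟩

/-- The IQN problem data: `n` twice continuously differentiable sample functions
`f i : ℝ^p → ℝ`, `μ`-strongly convex with `L`-Lipschitz gradients and `L̃`-Lipschitz
Hessians, and the optimizer `x*` of `f = (1/n) Σ f i`. -/
structure IQNProblem (p n : ℕ) where
  hp : 1 ≤ p
  hn : 1 ≤ n
  f : Fin n → Vec p → ℝ
  Hess : Fin n → Vec p → Mat p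
  mu : ℝ
  Lg : ℝ
  Ltil : ℝ
  xstar : Vec p
  hmu : 0 < mu
  hmuL : mu ≤ Lg
  hLtil : 0 < Ltil
  hC2 : ∀ i, ContDiff ℝ 2 (f i)
  hHess : ∀ i, HasHessian (f i) (Hess i)
  hlow : ∀ i, ∀ x xh : Vec p,
    mu * ‖x - xh‖^2 ≤ ⟪gradient (f i) x - gradient (f i) xh, x - xh⟫
  hup : ∀ i, ∀ x xh : Vec p,
    ⟪gradient (f i) x - gradient (f i) xh, x - xh⟫ ≤ Lg * ‖x - xh‖^2
  hLip : ∀ i, ∀ u v : Vec p, opNorm (Hess i u - Hess i v) ≤ Ltil * ‖u - v‖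
  hopt : gradient (fun x => (n : ℝ)⁻¹ * ∑ i, f i x) xstar = 0
  hmin : ∀ x : Vec p, (n : ℝ)⁻¹ * ∑ i, f i xstar ≤ (n : ℝ)⁻¹ * ∑ i, f i x

/-- A run of the IQN iteration: sequences `x^t`, `z_i^t` and symmetric matrices `B_i^t`
following the IQN update with cyclic index, all steps assumed well defined. -/
structure IQNState {p n : ℕ} (P : IQNProblem p n) where
  x : ℕ → Vec p
  z : Fin n → ℕ → Vec p
  B : Fin n → ℕ → Mat p
  hz0 : ∀ i, z i 0 = x 0
  hsym : ∀ i t, (B i t).IsSymm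
  hinv : ∀ t, IsUnit ((n : ℝ)⁻¹ • ∑ i, B i t)
  hx : ∀ t, x (t+1) = applyM ((n : ℝ)⁻¹ • ∑ i, B i t)⁻¹
      ((n : ℝ)⁻¹ • ∑ i, applyM (B i t) (z i t) - (n : ℝ)⁻¹ • ∑ i, gradient (P.f i) (z i t))
  hzupd : ∀ t, z (cyc P.hn t) (t+1) = x (t+1)
  hzfix : ∀ t, ∀ j, j ≠ cyc P.hn t → z j (t+1) = z j t
  hs : ∀ t, z (cyc P.hn t) (t+1) - z (cyc P.hn t) t ≠ 0
  hys : ∀ t, dotV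
      (gradient (P.f (cyc P.hn t)) (z (cyc P.hn t) (t+1)) -
        gradient (P.f (cyc P.hn t)) (z (cyc P.hn t) t))
      (z (cyc P.hn t) (t+1) - z (cyc P.hn t) t) ≠ 0
  hsBs : ∀ t, quadForm (B (cyc P.hn t) t)
      (z (cyc P.hn t) (t+1) - z (cyc P.hn t) t)
      (z (cyc P.hn t) (t+1) - z (cyc P.hn t) t) ≠ 0
  hBupd : ∀ t, B (cyc P.hn t) (t+1) = bfgsUpdate (B (cyc P.hn t) t)
      (z (cyc P.hn t) (t+1) - z (cyc P.hn t) t)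
      (gradient (P.f (cyc P.hn t)) (z (cyc P.hn t) (t+1)) -
        gradient (P.f (cyc P.hn t)) (z (cyc P.hn t) t))
  hBfix : ∀ t, ∀ j, j ≠ cyc P.hn t → B j (t+1) = B j t

/-
In the weighted norm the target Hessian becomes the identity. If the secant pair were exact
(`y = s`), the BFGS update would decrease `‖B - 1‖²` by at least a third of the squared Dennis–Moré
ratio; linearizing the gradient at `x*` perturbs `y`, and hence this inequality, by an error
proportional to the distance from the current iterates to `x*`. As long as the matrices stay close
to their targets, the Newton step halves that distance over each cycle, so the errors are
geometrically summable and can be absorbed in a potential that decreases by a multiple of the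
squared ratio. The squared ratios are therefore summable along the updates of each component.
-/

section Frobenius

open scoped Matrix.Norms.Frobenius

variable {p : ℕ}

lemma frobenius_norm_sq (A : Mat p) : ‖A‖ ^ 2 = ∑ i, ∑ j, A i j ^ 2 := by
  rw [frobenius_norm_def, ← Real.sqrt_eq_rpow, Real.sq_sqrt (by positivity)]
  simp

lemma wNorm_eq_norm (M A : Mat p) : wNorm M A = ‖M * A * M‖ := by
  rw [wNorm, frobNorm, ← frobenius_norm_sq, Real.sqrt_sq (norm_nonneg _)]

lemma outer_apply (u v : Vec p) (i j : Fin p) : outer u v i j = u i * v j := rfl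

lemma norm_outer_le (u v : Vec p) : ‖outer u v‖ ≤ ‖u‖ * ‖v‖ := by
  rw [outer, vecMulVec_eq Unit]
  refine (frobenius_norm_mul _ _).trans_eq ?_
  rw [frobenius_norm_replicateCol, frobenius_norm_replicateRow]
  rfl

lemma norm_applyM_le_frobenius (A : Mat p) (v : Vec p) : ‖applyM A v‖ ≤ ‖A‖ * ‖v‖ := by
  have h := frobenius_norm_mul A (replicateCol Unit v.ofLp)
  rwa [← replicateCol_mulVec, frobenius_norm_replicateCol, frobenius_norm_replicateCol] at h

lemma dotV_eq_inner (u v : Vec p) : dotV u v = ⟪u, v⟫ := by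
  rw [real_inner_comm]
  rfl

lemma quadForm_eq_inner (A : Mat p) (u v : Vec p) : quadForm A u v = ⟪u, applyM A v⟫ :=
  (inner_toEuclideanCLM A u v).symm

lemma norm_add_smul_outer_self_sq (A : Mat p) (c : ℝ) (u : Vec p) :
    ‖A + c • outer u u‖ ^ 2 = ‖A‖ ^ 2 + 2 * c * ⟪u, applyM A u⟫ + c ^ 2 * (‖u‖ ^ 2) ^ 2 := by
  have hquad : ⟪u, applyM A u⟫ = ∑ i, ∑ j, A i j * (u i * u j) := by
    rw [← quadForm_eq_inner]
    simp only [quadForm, dotProduct, mulVec, Finset.mul_sum]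
    exact Finset.sum_congr rfl fun i _ => Finset.sum_congr rfl fun j _ => by
      change u i * (A i j * u j) = _
      ring
  have hnorm : (‖u‖ ^ 2) ^ 2 = ∑ i, ∑ j, (u i * u j) ^ 2 := by
    rw [EuclideanSpace.real_norm_sq_eq, sq, Finset.sum_mul_sum]
    simp only [mul_pow]
  rw [hquad, hnorm, frobenius_norm_sq, frobenius_norm_sq]
  simp only [Finset.mul_sum, ← Finset.sum_add_distrib]
  exact Finset.sum_congr rfl fun i _ => Finset.sum_congr rfl fun j _ => by
    rw [Matrix.add_apply, Matrix.smul_apply, outer_apply, smul_eq_mul]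
    ring

end Frobenius

section Action

variable {p : ℕ}

lemma applyM_mul (A C : Mat p) (v : Vec p) : applyM (A * C) v = applyM A (applyM C v) := by
  rw [applyM, map_mul]
  rfl

lemma applyM_one (v : Vec p) : applyM 1 v = v := by
  rw [applyM, map_one]
  rfl

lemma applyM_sub (A : Mat p) (u v : Vec p) : applyM A (u - v) = applyM A u - applyM A v :=
  map_sub _ u v

lemma sub_applyM (A C : Mat p) (v : Vec p) : applyM (A - C) v = applyM A v - applyM C v := by
  rw [applyM, map_sub]
  rfl

lemma norm_applyM_le (A : Mat p) (v : Vec p) : ‖applyM A v‖ ≤ opNorm A * ‖v‖ :=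
  ContinuousLinearMap.le_opNorm _ v

lemma inner_applyM_left {A : Mat p} (hA : A.IsSymm) (u v : Vec p) :
    ⟪applyM A u, v⟫ = ⟪u, applyM A v⟫ := by
  rw [← quadForm_eq_inner, real_inner_comm, ← dotV_eq_inner, quadForm, dotProduct_mulVec,
    ← mulVec_transpose, hA.eq, dotProduct_comm]
  rfl

lemma outer_applyM (A C : Mat p) (u v : Vec p) :
    outer (applyM A u) (applyM C v) = A * outer u v * Cᵀ := by
  rw [outer, outer, mul_vecMulVec, vecMulVec_mul, vecMul_transpose]
  rfl

end Action

section BFGS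

open scoped Matrix.Norms.Frobenius

variable {p : ℕ}

lemma inner_applyM_outer (s v : Vec p) : ⟪v, applyM (outer s s) v⟫ = ⟪s, v⟫ ^ 2 := by
  rw [← quadForm_eq_inner, quadForm, outer, vecMulVec_mulVec, op_smul_eq_smul, dotProduct_smul,
    smul_eq_mul, sq]
  change dotV s v * dotV v s = _
  rw [dotV_eq_inner, dotV_eq_inner, real_inner_comm s v]

lemma abs_inner_applyM_sub_norm_sq_le (B : Mat p) (v : Vec p) :
    |⟪v, applyM B v⟫ - ‖v‖ ^ 2| ≤ ‖B - 1‖ * ‖v‖ ^ 2 := by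
  have hsplit : ⟪v, applyM B v⟫ - ‖v‖ ^ 2 = ⟪v, applyM (B - 1) v⟫ := by
    rw [sub_applyM, applyM_one, inner_sub_right, real_inner_self_eq_norm_sq]
  calc |⟪v, applyM B v⟫ - ‖v‖ ^ 2| ≤ ‖v‖ * ‖applyM (B - 1) v‖ :=
        hsplit ▸ abs_real_inner_le_norm _ _
    _ ≤ ‖v‖ * (‖B - 1‖ * ‖v‖) := by gcongr; exact norm_applyM_le_frobenius _ _
    _ = ‖B - 1‖ * ‖v‖ ^ 2 := by ring

lemma half_norm_sq_le_inner_applyM {B : Mat p} (hB : ‖B - 1‖ ≤ 1 / 2) (v : Vec p) :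
    1 / 2 * ‖v‖ ^ 2 ≤ ⟪v, applyM B v⟫ := by
  have hquad := abs_le.1 (abs_inner_applyM_sub_norm_sq_le B v)
  have hle : ‖B - 1‖ * ‖v‖ ^ 2 ≤ 1 / 2 * ‖v‖ ^ 2 := by gcongr
  linarith [hquad.1]

lemma inner_applyM_sq_le {B : Mat p} (hsymm : B.IsSymm) (hpos : ∀ v, 0 ≤ ⟪v, applyM B v⟫)
    (u v : Vec p) : ⟪u, applyM B v⟫ ^ 2 ≤ ⟪u, applyM B u⟫ * ⟪v, applyM B v⟫ :=
  LinearMap.BilinForm.apply_sq_le_of_symm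
    ((innerₗ (Vec p)).compl₂ (toEuclideanCLM (𝕜 := ℝ) B).toLinearMap) hpos
    ⟨fun a b => (real_inner_comm _ _).trans (inner_applyM_left hsymm b a)⟩ u v

lemma inner_applyM_sub_one {B : Mat p} (hsymm : B.IsSymm) (s : Vec p) :
    ⟪applyM (B - 1) s, applyM B (applyM (B - 1) s)⟫ =
      ⟪applyM B s, applyM B (applyM B s)⟫ - 2 * ‖applyM B s‖ ^ 2 + ⟪s, applyM B s⟫ := by
  rw [sub_applyM, applyM_one, applyM_sub, inner_sub_left, inner_sub_right, inner_sub_right,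
    ← inner_applyM_left hsymm s, real_inner_self_eq_norm_sq]
  ring

lemma bfgsUpdate_eq_sub_smul_outer {B : Mat p} (hsymm : B.IsSymm) (s y : Vec p) :
    bfgsUpdate B s y = B + ⟪y, s⟫⁻¹ • outer y y -
      ⟪s, applyM B s⟫⁻¹ • outer (applyM B s) (applyM B s) := by
  rw [bfgsUpdate, dotV_eq_inner, quadForm_eq_inner, outer_applyM, hsymm.eq]

lemma norm_bfgsUpdate_self_sub_one_sq {B : Mat p} (hsymm : B.IsSymm) {s : Vec p} (hs : s ≠ 0)
    (hβ : ⟪s, applyM B s⟫ ≠ 0) :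
    ‖bfgsUpdate B s s - 1‖ ^ 2 = ‖B - 1‖ ^ 2 -
      ⟪applyM (B - 1) s, applyM B (applyM (B - 1) s)⟫ / ⟪s, applyM B s⟫ -
      (⟪applyM B s, applyM B (applyM B s)⟫ * ⟪s, applyM B s⟫ - (‖applyM B s‖ ^ 2) ^ 2) /
        ⟪s, applyM B s⟫ ^ 2 := by
  have hσ : ‖s‖ ≠ 0 := norm_ne_zero_iff.2 hs
  have hupdate : bfgsUpdate B s s - 1 = B - 1 + (‖s‖ ^ 2)⁻¹ • outer s s +
      (-⟪s, applyM B s⟫⁻¹) • outer (applyM B s) (applyM B s) := by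
    rw [bfgsUpdate_eq_sub_smul_outer hsymm, real_inner_self_eq_norm_sq, neg_smul]
    abel
  have hw : ⟪applyM B s, applyM (B - 1 + (‖s‖ ^ 2)⁻¹ • outer s s) (applyM B s)⟫ =
      ⟪applyM B s, applyM B (applyM B s)⟫ - ‖applyM B s‖ ^ 2 +
        (‖s‖ ^ 2)⁻¹ * ⟪s, applyM B s⟫ ^ 2 := by
    rw [← inner_applyM_outer, ← real_inner_self_eq_norm_sq (applyM B s), ← inner_sub_right,
      ← real_inner_smul_right, ← inner_add_right]
    simp only [applyM, map_add, map_sub, map_one, map_smul]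
    rfl
  rw [hupdate, norm_add_smul_outer_self_sq, norm_add_smul_outer_self_sq, hw,
    inner_applyM_sub_one hsymm, sub_applyM, applyM_one, inner_sub_right, real_inner_self_eq_norm_sq]
  field_simp
  ring

lemma norm_bfgsUpdate_self_sub_one_sq_le {B : Mat p} (hsymm : B.IsSymm) (hB : ‖B - 1‖ ≤ 1 / 2)
    {s : Vec p} (hs : s ≠ 0) :
    ‖bfgsUpdate B s s - 1‖ ^ 2 ≤ ‖B - 1‖ ^ 2 - 1 / 3 * (‖applyM (B - 1) s‖ / ‖s‖) ^ 2 := by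
  have : 0 < ‖s‖ := norm_pos_iff.2 hs
  have hlow := half_norm_sq_le_inner_applyM hB
  have hβ : 0 < ⟪s, applyM B s⟫ := (by positivity : 0 < 1 / 2 * ‖s‖ ^ 2).trans_le (hlow s)
  have hupper : ⟪s, applyM B s⟫ ≤ 3 / 2 * ‖s‖ ^ 2 := by
    have hquad := (abs_le.1 (abs_inner_applyM_sub_norm_sq_le B s)).2
    have hle : ‖B - 1‖ * ‖s‖ ^ 2 ≤ 1 / 2 * ‖s‖ ^ 2 := by gcongr
    linarith
  have hcs : (‖applyM B s‖ ^ 2) ^ 2 ≤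
      ⟪applyM B s, applyM B (applyM B s)⟫ * ⟪s, applyM B s⟫ := by
    rw [← real_inner_self_eq_norm_sq]
    exact inner_applyM_sq_le hsymm (fun v => le_trans (by positivity) (hlow v)) _ s
  have hdrop : 1 / 3 * (‖applyM (B - 1) s‖ / ‖s‖) ^ 2 ≤
      ⟪applyM (B - 1) s, applyM B (applyM (B - 1) s)⟫ / ⟪s, applyM B s⟫ := by
    calc 1 / 3 * (‖applyM (B - 1) s‖ / ‖s‖) ^ 2
        = 1 / 2 * ‖applyM (B - 1) s‖ ^ 2 / (3 / 2 * ‖s‖ ^ 2) := by field_simp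
      _ ≤ _ := div_le_div₀ (le_trans (by positivity) (hlow _)) (hlow _) hβ hupper
  rw [norm_bfgsUpdate_self_sub_one_sq hsymm hs hβ.ne']
  have hcs' := div_nonneg (sub_nonneg.2 hcs) (sq_nonneg ⟪s, applyM B s⟫)
  linarith

lemma bfgsUpdate_sub_bfgsUpdate_self (B : Mat p) {s y : Vec p} (hs : s ≠ 0) (hys : ⟪y, s⟫ ≠ 0) :
    bfgsUpdate B s y - bfgsUpdate B s s = ⟪y, s⟫⁻¹ •
      (outer (y - s) y + outer s (y - s) - (⟪y - s, s⟫ / ‖s‖ ^ 2) • outer s s) := by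
  have hs0 : ‖s‖ ≠ 0 := norm_ne_zero_iff.2 hs
  ext i j
  simp only [bfgsUpdate, dotV_eq_inner, inner_sub_left, real_inner_self_eq_norm_sq,
    Matrix.sub_apply, Matrix.add_apply, Matrix.smul_apply, outer_apply, smul_eq_mul,
    PiLp.sub_apply]
  field_simp
  ring

lemma abs_inner_sub_norm_sq_le {s y : Vec p} {θ : ℝ} (hy : ‖y - s‖ ≤ θ * ‖s‖) :
    |⟪y - s, s⟫| ≤ θ * ‖s‖ ^ 2 :=
  calc |⟪y - s, s⟫| ≤ ‖y - s‖ * ‖s‖ := abs_real_inner_le_norm _ _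
    _ ≤ θ * ‖s‖ * ‖s‖ := by gcongr
    _ = θ * ‖s‖ ^ 2 := by ring

lemma half_norm_sq_le_inner {s y : Vec p} {θ : ℝ} (hθ : θ ≤ 1 / 2) (hy : ‖y - s‖ ≤ θ * ‖s‖) :
    ‖s‖ ^ 2 / 2 ≤ ⟪y, s⟫ := by
  have hdev := (abs_le.1 (abs_inner_sub_norm_sq_le hy)).1
  rw [inner_sub_left, real_inner_self_eq_norm_sq] at hdev
  nlinarith [sq_nonneg ‖s‖]

lemma norm_bfgsUpdate_sub_bfgsUpdate_self_le (B : Mat p) {s y : Vec p} (hs : s ≠ 0) {θ : ℝ}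
    (hθ : θ ≤ 1 / 2) (hy : ‖y - s‖ ≤ θ * ‖s‖) :
    ‖bfgsUpdate B s y - bfgsUpdate B s s‖ ≤ 7 * θ := by
  have hs0 : 0 < ‖s‖ := norm_pos_iff.2 hs
  have hθ0 : 0 ≤ θ := nonneg_of_mul_nonneg_left ((norm_nonneg _).trans hy) hs0
  have hcurv := half_norm_sq_le_inner hθ hy
  have hys : 0 < ⟪y, s⟫ := (by positivity : 0 < ‖s‖ ^ 2 / 2).trans_le hcurv
  have hynorm : ‖y‖ ≤ 3 / 2 * ‖s‖ := by
    nlinarith [norm_le_norm_add_norm_sub' y s]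
  have hterms : ‖outer (y - s) y + outer s (y - s) - (⟪y - s, s⟫ / ‖s‖ ^ 2) • outer s s‖ ≤
      7 / 2 * θ * ‖s‖ ^ 2 :=
    calc _ ≤ ‖y - s‖ * ‖y‖ + ‖s‖ * ‖y - s‖ + |⟪y - s, s⟫| / ‖s‖ ^ 2 * (‖s‖ * ‖s‖) := by
          refine norm_sub_le_of_le (norm_add_le_of_le (norm_outer_le _ _) (norm_outer_le _ _)) ?_
          rw [norm_smul, Real.norm_eq_abs, abs_div, abs_of_nonneg (sq_nonneg ‖s‖)]
          gcongr
          exact norm_outer_le _ _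
      _ ≤ θ * ‖s‖ * (3 / 2 * ‖s‖) + ‖s‖ * (θ * ‖s‖) + θ * ‖s‖ ^ 2 / ‖s‖ ^ 2 * (‖s‖ * ‖s‖) := by
          gcongr
          exact abs_inner_sub_norm_sq_le hy
      _ = 7 / 2 * θ * ‖s‖ ^ 2 := by field_simp; ring
  rw [bfgsUpdate_sub_bfgsUpdate_self B hs hys.ne', norm_smul, norm_inv, Real.norm_eq_abs,
    abs_of_pos hys]
  calc _ ≤ (‖s‖ ^ 2 / 2)⁻¹ * (7 / 2 * θ * ‖s‖ ^ 2) := by gcongr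
    _ = 7 * θ := by field_simp

lemma norm_bfgsUpdate_sub_one_sq_le {B : Mat p} (hsymm : B.IsSymm) (hB : ‖B - 1‖ ≤ 1 / 2)
    {s y : Vec p} (hs : s ≠ 0) {θ : ℝ} (hθ : θ ≤ 1 / 2) (hy : ‖y - s‖ ≤ θ * ‖s‖) :
    ‖bfgsUpdate B s y - 1‖ ^ 2 ≤
      ‖B - 1‖ ^ 2 - 1 / 3 * (‖applyM (B - 1) s‖ / ‖s‖) ^ 2 + 32 * θ := by
  have hexact := norm_bfgsUpdate_self_sub_one_sq_le hsymm hB hs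
  have hpert := norm_bfgsUpdate_sub_bfgsUpdate_self_le B hs hθ hy
  have hhalf : ‖bfgsUpdate B s s - 1‖ ≤ 1 / 2 := by
    refine le_trans ((sq_le_sq₀ (norm_nonneg _) (norm_nonneg _)).1 ?_) hB
    exact hexact.trans (sub_le_self _ (by positivity))
  have htri : ‖bfgsUpdate B s y - 1‖ ≤ ‖bfgsUpdate B s s - 1‖ + 7 * θ := by
    rw [← sub_add_sub_cancel' (bfgsUpdate B s s)]
    exact norm_add_le_of_le le_rfl hpert
  have hsq : ‖bfgsUpdate B s y - 1‖ ^ 2 ≤ (‖bfgsUpdate B s s - 1‖ + 7 * θ) ^ 2 := by gcongr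
  nlinarith [norm_nonneg (bfgsUpdate B s y - bfgsUpdate B s s)]

end BFGS

section Weighted

open scoped Matrix.Norms.Frobenius

variable {p : ℕ} {M H : Mat p} {K : ℝ}

lemma applyM_inv_applyM (hM : IsUnit M.det) (v : Vec p) : applyM M⁻¹ (applyM M v) = v := by
  rw [← applyM_mul, nonsing_inv_mul M hM, applyM_one]

lemma applyM_applyM_inv (hM : IsUnit M.det) (v : Vec p) : applyM M (applyM M⁻¹ v) = v := by
  rw [← applyM_mul, mul_nonsing_inv M hM, applyM_one]

lemma isUnit_det_of_mul_mul_eq_one (hMH : M * H * M = 1) : IsUnit M.det :=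
  isUnit_det_of_left_inverse hMH

lemma wNorm_sub_eq (hMH : M * H * M = 1) (B : Mat p) :
    wNorm M (B - H) = ‖M * B * M - 1‖ := by
  rw [wNorm_eq_norm, mul_sub, sub_mul, hMH]

lemma isSymm_conj (hM : M.IsSymm) {B : Mat p} (hB : B.IsSymm) : (M * B * M).IsSymm := by
  rw [IsSymm, transpose_mul, transpose_mul, hM.eq, hB.eq, mul_assoc]

lemma bfgsUpdate_conj (hM : M.IsSymm) (hdet : IsUnit M.det) (B : Mat p) (s y : Vec p) :
    M * bfgsUpdate B s y * M = bfgsUpdate (M * B * M) (applyM M⁻¹ s) (applyM M y) := by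
  have hs : applyM M (applyM M⁻¹ s) = s := applyM_applyM_inv hdet s
  have hdot : dotV (applyM M y) (applyM M⁻¹ s) = dotV y s := by
    rw [dotV_eq_inner, dotV_eq_inner, inner_applyM_left hM, hs]
  have hquad : quadForm (M * B * M) (applyM M⁻¹ s) (applyM M⁻¹ s) = quadForm B s s := by
    rw [quadForm_eq_inner, quadForm_eq_inner, applyM_mul, applyM_mul, hs,
      ← inner_applyM_left hM, hs]
  have houter : outer (applyM M⁻¹ s) (applyM M⁻¹ s) = M⁻¹ * outer s s * M⁻¹ := by
    rw [outer_applyM, transpose_nonsing_inv, hM.eq]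
  rw [bfgsUpdate, bfgsUpdate, hdot, hquad, outer_applyM, hM.eq, houter]
  simp only [mul_add, mul_sub, add_mul, sub_mul, mul_smul_comm, smul_mul_assoc, mul_assoc]
  rw [mul_nonsing_inv_cancel_left M _ hdet, nonsing_inv_mul_cancel_left M _ hdet]

lemma norm_applyM_le_mul_norm_conj (hdet : IsUnit M.det) (hK : opNorm M⁻¹ ≤ K) (A : Mat p)
    (v : Vec p) : ‖applyM A v‖ ≤ K * ‖applyM (M * A * M) (applyM M⁻¹ v)‖ := by
  rw [applyM_mul, applyM_applyM_inv hdet, applyM_mul]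
  calc ‖applyM A v‖ = ‖applyM M⁻¹ (applyM M (applyM A v))‖ := by rw [applyM_inv_applyM hdet]
    _ ≤ opNorm M⁻¹ * ‖applyM M (applyM A v)‖ := norm_applyM_le _ _
    _ ≤ K * ‖applyM M (applyM A v)‖ := by gcongr

lemma norm_applyM_le_wNorm (hdet : IsUnit M.det) (hK : opNorm M⁻¹ ≤ K) (A : Mat p) (v : Vec p) :
    ‖applyM A v‖ ≤ K ^ 2 * wNorm M A * ‖v‖ := by
  have hK0 : 0 ≤ K := (norm_nonneg _).trans hK
  calc ‖applyM A v‖ ≤ K * ‖applyM (M * A * M) (applyM M⁻¹ v)‖ :=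
        norm_applyM_le_mul_norm_conj hdet hK A v
    _ ≤ K * (wNorm M A * (opNorm M⁻¹ * ‖v‖)) := by
        rw [wNorm_eq_norm]
        gcongr
        exact (norm_applyM_le_frobenius _ _).trans (by gcongr; exact norm_applyM_le _ _)
    _ ≤ K * (wNorm M A * (K * ‖v‖)) := by
        rw [wNorm_eq_norm]
        gcongr
    _ = K ^ 2 * wNorm M A * ‖v‖ := by ring

lemma norm_le_mul_norm_applyM_inv (hdet : IsUnit M.det) (hK : opNorm M ≤ K) (v : Vec p) :
    ‖v‖ ≤ K * ‖applyM M⁻¹ v‖ :=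
  calc ‖v‖ = ‖applyM M (applyM M⁻¹ v)‖ := by rw [applyM_applyM_inv hdet]
    _ ≤ opNorm M * ‖applyM M⁻¹ v‖ := norm_applyM_le _ _
    _ ≤ K * ‖applyM M⁻¹ v‖ := by gcongr

lemma norm_sq_le_inner_applyM_of_wNorm_le (hM : M.IsSymm) (hMH : M * H * M = 1)
    (hK : opNorm M ≤ K) {B : Mat p} (hB : wNorm M (B - H) ≤ 1 / 2) (v : Vec p) :
    ‖v‖ ^ 2 ≤ 2 * K ^ 2 * ⟪v, applyM B v⟫ := by
  have hdet := isUnit_det_of_mul_mul_eq_one hMH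
  have hv := applyM_applyM_inv hdet v
  have hcoer := half_norm_sq_le_inner_applyM (wNorm_sub_eq hMH B ▸ hB) (applyM M⁻¹ v)
  rw [applyM_mul, applyM_mul, ← inner_applyM_left hM, hv] at hcoer
  calc ‖v‖ ^ 2 ≤ (K * ‖applyM M⁻¹ v‖) ^ 2 := by
        gcongr
        exact norm_le_mul_norm_applyM_inv hdet hK v
    _ = 2 * K ^ 2 * (1 / 2 * ‖applyM M⁻¹ v‖ ^ 2) := by ring
    _ ≤ 2 * K ^ 2 * ⟪v, applyM B v⟫ := by gcongr

lemma norm_applyM_sub_applyM_inv_le (hMH : M * H * M = 1) (hK : opNorm M ≤ K) {s y : Vec p}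
    {τ : ℝ} (hτ : 0 ≤ τ) (hy : ‖y - applyM H s‖ ≤ τ * ‖s‖) :
    ‖applyM M y - applyM M⁻¹ s‖ ≤ K ^ 2 * τ * ‖applyM M⁻¹ s‖ := by
  have hK0 : 0 ≤ K := (norm_nonneg _).trans hK
  have hinv : M⁻¹ = M * H := inv_eq_left_inv hMH
  calc ‖applyM M y - applyM M⁻¹ s‖ = ‖applyM M (y - applyM H s)‖ := by
        rw [applyM_sub, ← applyM_mul, ← hinv]
    _ ≤ opNorm M * ‖y - applyM H s‖ := norm_applyM_le _ _
    _ ≤ K * (τ * (K * ‖applyM M⁻¹ s‖)) := by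
        gcongr
        refine hy.trans ?_
        gcongr
        exact norm_le_mul_norm_applyM_inv (isUnit_det_of_mul_mul_eq_one hMH) hK s
    _ = K ^ 2 * τ * ‖applyM M⁻¹ s‖ := by ring

lemma norm_applyM_div_norm_le (hdet : IsUnit M.det) (hK : opNorm M⁻¹ ≤ K) (A : Mat p)
    {s : Vec p} (hs : s ≠ 0) :
    ‖applyM A s‖ / ‖s‖ ≤
      K ^ 2 * (‖applyM (M * A * M) (applyM M⁻¹ s)‖ / ‖applyM M⁻¹ s‖) := by
  have hs0 : 0 < ‖s‖ := norm_pos_iff.2 hs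
  have hNs : 0 < ‖applyM M⁻¹ s‖ := norm_pos_iff.2 fun h => hs <| by
    rw [← applyM_applyM_inv hdet s, h, applyM, map_zero]
  have hK0 : 0 ≤ K := (norm_nonneg _).trans hK
  rw [← mul_div_assoc, div_le_div_iff₀ hs0 hNs]
  calc ‖applyM A s‖ * ‖applyM M⁻¹ s‖
      ≤ (K * ‖applyM (M * A * M) (applyM M⁻¹ s)‖) * (K * ‖s‖) := by
        gcongr
        · exact norm_applyM_le_mul_norm_conj hdet hK A s
        · exact (norm_applyM_le _ _).trans (by gcongr)
    _ = K ^ 2 * ‖applyM (M * A * M) (applyM M⁻¹ s)‖ * ‖s‖ := by ring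

lemma wNorm_bfgsUpdate_sub_sq_le (hM : M.IsSymm) (hMH : M * H * M = 1) (hK : opNorm M ≤ K)
    (hK' : opNorm M⁻¹ ≤ K) {B : Mat p} (hB : B.IsSymm) (hBH : wNorm M (B - H) ≤ 1 / 2)
    {s y : Vec p} (hs : s ≠ 0) {τ : ℝ} (hKτ : K ^ 2 * τ ≤ 1 / 2)
    (hy : ‖y - applyM H s‖ ≤ τ * ‖s‖) :
    K ^ 4 * wNorm M (bfgsUpdate B s y - H) ^ 2 + 1 / 3 * (‖applyM (B - H) s‖ / ‖s‖) ^ 2 ≤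
      K ^ 4 * wNorm M (B - H) ^ 2 + 32 * K ^ 6 * τ := by
  have hdet := isUnit_det_of_mul_mul_eq_one hMH
  have hτ : 0 ≤ τ := nonneg_of_mul_nonneg_left ((norm_nonneg _).trans hy) (norm_pos_iff.2 hs)
  have hNs : applyM M⁻¹ s ≠ 0 := fun h => hs <| by
    rw [← applyM_applyM_inv hdet s, h, applyM, map_zero]
  have hratio : (‖applyM (B - H) s‖ / ‖s‖) ^ 2 ≤
      (K ^ 2 * (‖applyM (M * B * M - 1) (applyM M⁻¹ s)‖ / ‖applyM M⁻¹ s‖)) ^ 2 := by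
    rw [← hMH, ← sub_mul, ← mul_sub]
    gcongr
    exact norm_applyM_div_norm_le hdet hK' (B - H) hs
  have hstep := mul_le_mul_of_nonneg_left
    (norm_bfgsUpdate_sub_one_sq_le (isSymm_conj hM hB) (wNorm_sub_eq hMH B ▸ hBH) hNs hKτ
      (norm_applyM_sub_applyM_inv_le hMH hK hτ hy)) (by positivity : 0 ≤ K ^ 4)
  rw [← bfgsUpdate_conj hM hdet, ← wNorm_sub_eq hMH, ← wNorm_sub_eq hMH] at hstep
  linarith

end Weighted

lemma norm_le_of_sum_eq_sum_of_norm_sq_le_inner {ι E : Type*} [Fintype ι] [Nonempty ι]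
    [NormedAddCommGroup E] [InnerProductSpace ℝ E] {v : E} {a r : ι → E} {c R : ℝ} (hc : 0 ≤ c)
    (ha : ∀ i, ‖v‖ ^ 2 ≤ c * ⟪v, a i⟫) (hr : ∀ i, ‖r i‖ ≤ R)
    (hsum : ∑ i, a i = ∑ i, r i) : ‖v‖ ≤ c * R := by
  have hR : 0 ≤ R := (norm_nonneg _).trans (hr (Classical.arbitrary ι))
  have hcard : (0 : ℝ) < Fintype.card ι := by exact_mod_cast Fintype.card_pos
  have hmul : Fintype.card ι * ‖v‖ ^ 2 ≤ Fintype.card ι * (‖v‖ * (c * R)) :=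
    calc Fintype.card ι * ‖v‖ ^ 2 = ∑ _i : ι, ‖v‖ ^ 2 := by simp
      _ ≤ ∑ i, c * ⟪v, a i⟫ := Finset.sum_le_sum fun i _ => ha i
      _ = c * ∑ i, ⟪v, r i⟫ := by rw [← Finset.mul_sum, ← inner_sum, hsum, inner_sum]
      _ ≤ c * ∑ _i : ι, ‖v‖ * R := by
          gcongr with i
          exact (real_inner_le_norm _ _).trans (by gcongr; exact hr i)
      _ = Fintype.card ι * (‖v‖ * (c * R)) := by
          rw [Finset.sum_const, Finset.card_univ, nsmul_eq_mul]
          ring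
  have hsq : ‖v‖ * ‖v‖ ≤ ‖v‖ * (c * R) := sq ‖v‖ ▸ le_of_mul_le_mul_left hmul hcard
  rcases (norm_nonneg v).eq_or_lt with hv | hv
  · exact hv ▸ by positivity
  · exact le_of_mul_le_mul_left hsq hv

lemma tendsto_zero_of_add_le {Φ d : ℕ → ℝ} (hΦ : ∀ k, 0 ≤ Φ k) (hd : ∀ k, 0 ≤ d k)
    (hstep : ∀ k, Φ (k + 1) + d k ≤ Φ k) : Tendsto d atTop (nhds 0) := by
  have hsum (m : ℕ) : ∑ k ∈ Finset.range m, d k ≤ Φ 0 - Φ m := by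
    rw [← Finset.sum_range_sub']
    exact Finset.sum_le_sum fun k _ => le_sub_iff_add_le'.2 (hstep k)
  exact (summable_of_sum_range_le hd fun m =>
    (hsum m).trans (sub_le_self _ (hΦ m))).tendsto_atTop_zero

section UpdateCount

variable {n : ℕ}

/-- The number of iterations before time `t` at which the cyclic index equals `j`. -/
def updateCount (j : Fin n) (t : ℕ) : ℕ := Nat.count (· ≡ j [MOD n]) t

lemma modEq_iff_eq_cyc (hn : 1 ≤ n) (t : ℕ) (j : Fin n) : t ≡ j [MOD n] ↔ j = cyc hn t := by
  rw [Nat.ModEq, Nat.mod_eq_of_lt j.2, Fin.ext_iff, eq_comm]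
  rfl

lemma updateCount_cyc_succ (hn : 1 ≤ n) (t : ℕ) :
    updateCount (cyc hn t) (t + 1) = updateCount (cyc hn t) t + 1 :=
  Nat.count_succ_eq_succ_count_iff.2 ((modEq_iff_eq_cyc hn t _).2 rfl)

lemma updateCount_succ_of_ne (hn : 1 ≤ n) {t : ℕ} {j : Fin n} (hj : j ≠ cyc hn t) :
    updateCount j (t + 1) = updateCount j t :=
  Nat.count_succ_eq_count_iff.2 (mt (modEq_iff_eq_cyc hn t j).1 hj)

lemma updateCount_cyc_le (hn : 1 ≤ n) (t : ℕ) (j : Fin n) :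
    updateCount (cyc hn t) t ≤ updateCount j t := by
  rw [updateCount, updateCount, Nat.count_modEq_card _ hn, Nat.count_modEq_card _ hn]
  simp [cyc]

lemma cyc_add_mul (hn : 1 ≤ n) (i : Fin n) (k : ℕ) : cyc hn (i.1 + k * n) = i :=
  Fin.ext <| (Nat.add_mul_mod_self_right _ _ _).trans (Nat.mod_eq_of_lt i.2)

end UpdateCount

section Run

variable {p n : ℕ}

/-- The map `g` is approximated near `x₀` by the linear map `H`, in the strong sense that the
remainder `g - H` is `L * ρ`-Lipschitz on the ball of radius `ρ` around `x₀`. Gradients of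
functions with an `L`-Lipschitz Hessian have this property with `H` the Hessian at `x₀`. -/
def LinearizesAt (g : Vec p → Vec p) (H : Mat p) (x₀ : Vec p) (L : ℝ) : Prop :=
  ∀ ρ u v, ‖u - x₀‖ ≤ ρ → ‖v - x₀‖ ≤ ρ → ‖g u - g v - applyM H (u - v)‖ ≤ L * ρ * ‖u - v‖

/-- A run of the IQN iteration for the equation `∑ i, g i x = 0`, where the `g i` need not be
gradients. The new iterate is required only to solve the averaged quasi-Newton system. -/
structure IQNRun (hn : 1 ≤ n) (g : Fin n → Vec p → Vec p) where
  x : ℕ → Vec p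
  z : Fin n → ℕ → Vec p
  B : Fin n → ℕ → Mat p
  z_zero : ∀ i, z i 0 = x 0
  isSymm : ∀ i t, (B i t).IsSymm
  sum_applyM_succ : ∀ t, ∑ i, applyM (B i t) (x (t + 1)) =
    ∑ i, applyM (B i t) (z i t) - ∑ i, g i (z i t)
  z_cyc_succ : ∀ t, z (cyc hn t) (t + 1) = x (t + 1)
  z_succ_of_ne : ∀ t j, j ≠ cyc hn t → z j (t + 1) = z j t
  step_ne_zero : ∀ t, z (cyc hn t) (t + 1) - z (cyc hn t) t ≠ 0
  B_cyc_succ : ∀ t, B (cyc hn t) (t + 1) = bfgsUpdate (B (cyc hn t) t)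
    (z (cyc hn t) (t + 1) - z (cyc hn t) t)
    (g (cyc hn t) (z (cyc hn t) (t + 1)) - g (cyc hn t) (z (cyc hn t) t))
  B_succ_of_ne : ∀ t j, j ≠ cyc hn t → B j (t + 1) = B j t

/-- The standing assumptions of the local analysis around a zero `xstar` of `∑ i, g i`, with the
radii `ε` for the iterates and `η` for the matrices. The inequality `newton_le` makes a Newton step
halve the distance to `xstar`; `drift_le` makes the linearization errors raise the squared matrix
error by at most `η ^ 2 / 2` over the whole run. -/
structure IQNLocal (g : Fin n → Vec p → Vec p) (H M : Fin n → Mat p) (xstar : Vec p)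
    (K L η ε : ℝ) : Prop where
  isSymm : ∀ i, (M i).IsSymm
  conj_eq_one : ∀ i, M i * H i * M i = 1
  opNorm_le : ∀ i, opNorm (M i) ≤ K
  opNorm_inv_le : ∀ i, opNorm (M i)⁻¹ ≤ K
  linearizes : ∀ i, LinearizesAt (g i) (H i) xstar L
  sum_eq_zero : ∑ i, g i xstar = 0
  K_pos : 0 < K
  L_nonneg : 0 ≤ L
  η_pos : 0 < η
  η_le : η ≤ 1 / 2
  ε_pos : 0 < ε
  newton_le : 2 * K ^ 2 * (K ^ 2 * η + L * ε) ≤ 1 / 2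
  drift_le : 128 * K ^ 2 * (L * ε) ≤ η ^ 2

lemma exists_opNorm_le (A : Fin n → Mat p) : ∃ K, ∀ i, opNorm (A i) ≤ K :=
  ⟨∑ i, opNorm (A i), fun i =>
    Finset.single_le_sum (f := fun i => opNorm (A i)) (fun _ _ => norm_nonneg _)
      (Finset.mem_univ i)⟩

lemma exists_iqnLocal {g : Fin n → Vec p → Vec p} {H M : Fin n → Mat p} {xstar : Vec p} {L : ℝ}
    (hL : 0 ≤ L) (hg : ∀ i, LinearizesAt (g i) (H i) xstar L) (hzero : ∑ i, g i xstar = 0)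
    (hM : ∀ i, (M i).IsSymm ∧ M i * H i * M i = 1) :
    ∃ K η ε, IQNLocal g H M xstar K L η ε := by
  obtain ⟨K₁, hK₁⟩ := exists_opNorm_le M
  obtain ⟨K₂, hK₂⟩ := exists_opNorm_le fun i => (M i)⁻¹
  obtain ⟨K, hK, hK₁K, hK₂K⟩ : ∃ K : ℝ, 1 ≤ K ∧ K₁ ≤ K ∧ K₂ ≤ K :=
    ⟨max 1 (max K₁ K₂), by simp, by simp, by simp⟩
  obtain ⟨η, hη, hη_half, hKη⟩ : ∃ η : ℝ, 0 < η ∧ η ≤ 1 / 2 ∧ 8 * K ^ 4 * η ≤ 1 :=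
    ⟨1 / (8 * K ^ 4), by positivity,
      one_div_le_one_div_of_le two_pos (by nlinarith [one_le_pow₀ hK (n := 4)]),
      (mul_one_div_cancel (by positivity)).le⟩
  have hdrift : 128 * K ^ 2 * (L * (η ^ 2 / (128 * K ^ 2 * (L + 1)))) ≤ η ^ 2 :=
    calc 128 * K ^ 2 * (L * (η ^ 2 / (128 * K ^ 2 * (L + 1)))) = η ^ 2 * (L / (L + 1)) := by
          field_simp
      _ ≤ η ^ 2 := mul_le_of_le_one_right (sq_nonneg η)
          ((div_le_one (by positivity)).2 (by linarith))
  exact ⟨K, η, η ^ 2 / (128 * K ^ 2 * (L + 1)),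
    { isSymm := fun i => (hM i).1
      conj_eq_one := fun i => (hM i).2
      opNorm_le := fun i => (hK₁ i).trans hK₁K
      opNorm_inv_le := fun i => (hK₂ i).trans hK₂K
      linearizes := hg
      sum_eq_zero := hzero
      K_pos := by positivity
      L_nonneg := hL
      η_pos := hη
      η_le := hη_half
      ε_pos := by positivity
      newton_le := by nlinarith
      drift_le := hdrift }⟩

namespace IQNLocal

variable {g : Fin n → Vec p → Vec p} {H M : Fin n → Mat p} {xstar : Vec p} {K L η ε : ℝ}

lemma norm_applyM_sub_sub_le (h : IQNLocal g H M xstar K L η ε) {ρ : ℝ} (hρ : ρ ≤ ε) {i : Fin n}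
    {B : Mat p} (hB : wNorm (M i) (B - H i) ≤ η) {z : Vec p} (hz : ‖z - xstar‖ ≤ ρ) :
    ‖applyM B (z - xstar) - (g i z - g i xstar)‖ ≤ (K ^ 2 * η + L * ε) * ρ := by
  have hL := h.L_nonneg
  have hη := h.η_pos
  have hε := h.ε_pos
  have hmatrix := norm_applyM_le_wNorm (isUnit_det_of_mul_mul_eq_one (h.conj_eq_one i))
    (h.opNorm_inv_le i) (B - H i) (z - xstar)
  have hlin := h.linearizes i ρ z xstar hz (by simpa using (norm_nonneg _).trans hz)
  calc ‖applyM B (z - xstar) - (g i z - g i xstar)‖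
      = ‖applyM (B - H i) (z - xstar) - (g i z - g i xstar - applyM (H i) (z - xstar))‖ := by
        rw [sub_applyM]
        congr 1
        abel
    _ ≤ K ^ 2 * wNorm (M i) (B - H i) * ‖z - xstar‖ + L * ρ * ‖z - xstar‖ :=
        norm_sub_le_of_le hmatrix hlin
    _ ≤ K ^ 2 * η * ρ + L * ε * ρ := by gcongr
    _ = (K ^ 2 * η + L * ε) * ρ := by ring

lemma wNorm_bfgsUpdate_sub_sq_le_add_drift (h : IQNLocal g H M xstar K L η ε) {i : Fin n}
    {B : Mat p} (hsymm : B.IsSymm) (hB : wNorm (M i) (B - H i) ≤ η) {u v : Vec p}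
    (huv : u - v ≠ 0) {r : ℝ} (hr : r ≤ 1) (hu : ‖u - xstar‖ ≤ ε * r) (hv : ‖v - xstar‖ ≤ ε * r) :
    K ^ 4 * wNorm (M i) (bfgsUpdate B (u - v) (g i u - g i v) - H i) ^ 2 +
        1 / 3 * (‖applyM (B - H i) (u - v)‖ / ‖u - v‖) ^ 2 ≤
      K ^ 4 * (wNorm (M i) (B - H i) ^ 2 + η ^ 2 / 4 * r) := by
  have hη := h.η_pos
  have hLε : 0 ≤ L * ε := mul_nonneg h.L_nonneg h.ε_pos.le
  have hr0 : 0 ≤ r := nonneg_of_mul_nonneg_right ((norm_nonneg _).trans hu) h.ε_pos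
  have hτ : K ^ 2 * (L * (ε * r)) ≤ 1 / 2 :=
    calc K ^ 2 * (L * (ε * r)) = K ^ 2 * (L * ε) * r := by ring
      _ ≤ K ^ 2 * (L * ε) := mul_le_of_le_one_right (by positivity) hr
      _ ≤ 1 / 2 := by nlinarith [h.newton_le, (by positivity : 0 ≤ K ^ 4 * η)]
  have hdrift : 32 * K ^ 6 * (L * (ε * r)) ≤ K ^ 4 * (η ^ 2 / 4 * r) :=
    calc 32 * K ^ 6 * (L * (ε * r)) = K ^ 4 * r / 4 * (128 * K ^ 2 * (L * ε)) := by ring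
      _ ≤ K ^ 4 * r / 4 * η ^ 2 := by gcongr; exact h.drift_le
      _ = K ^ 4 * (η ^ 2 / 4 * r) := by ring
  have hstep := wNorm_bfgsUpdate_sub_sq_le (h.isSymm i) (h.conj_eq_one i) (h.opNorm_le i)
    (h.opNorm_inv_le i) hsymm (hB.trans h.η_le) huv hτ (h.linearizes i _ u v hu hv)
  linarith

end IQNLocal

namespace IQNRun

variable {hn : 1 ≤ n} {g : Fin n → Vec p → Vec p} (S : IQNRun hn g) (H M : Fin n → Mat p)

/-- The Dennis–Moré quotient `‖(B - H) s‖ / ‖s‖` of the step `s` of the `j`-th component. -/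
def dennisMoreRatio (j : Fin n) (t : ℕ) : ℝ :=
  ‖applyM (S.B j t - H j) (S.z j (t + 1) - S.z j t)‖ / ‖S.z j (t + 1) - S.z j t‖

/-- The Lyapunov function of the `j`-th component: the squared weighted matrix error plus a
geometric term that dominates all the linearization errors still to come. -/
def potential (η : ℝ) (j : Fin n) (t : ℕ) : ℝ :=
  wNorm (M j) (S.B j t - H j) ^ 2 + η ^ 2 / 2 * (1 / 2) ^ updateCount j t

variable {H M} {xstar : Vec p} {K L η ε : ℝ}

lemma dennisMoreRatio_nonneg (j : Fin n) (t : ℕ) : 0 ≤ S.dennisMoreRatio H j t :=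
  div_nonneg (norm_nonneg _) (norm_nonneg _)

lemma wNorm_sq_le_potential (j : Fin n) (t : ℕ) :
    wNorm (M j) (S.B j t - H j) ^ 2 ≤ S.potential H M η j t :=
  le_add_of_nonneg_right (by positivity)

lemma potential_nonneg (j : Fin n) (t : ℕ) : 0 ≤ S.potential H M η j t :=
  (sq_nonneg _).trans (S.wNorm_sq_le_potential j t)

lemma potential_succ_of_ne {t : ℕ} {j : Fin n} (hj : j ≠ cyc hn t) :
    S.potential H M η j (t + 1) = S.potential H M η j t := by
  rw [potential, potential, S.B_succ_of_ne t j hj, updateCount_succ_of_ne hn hj]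

lemma norm_x_succ_sub_le (h : IQNLocal g H M xstar K L η ε) {t : ℕ} {ρ : ℝ} (hρ : ρ ≤ ε)
    (hz : ∀ i, ‖S.z i t - xstar‖ ≤ ρ) (hB : ∀ i, wNorm (M i) (S.B i t - H i) ≤ η) :
    ‖S.x (t + 1) - xstar‖ ≤ ρ / 2 := by
  have : Nonempty (Fin n) := ⟨cyc hn t⟩
  have hρ0 : 0 ≤ ρ := (norm_nonneg _).trans (hz (cyc hn t))
  have hsum : ∑ i, applyM (S.B i t) (S.x (t + 1) - xstar) =
      ∑ i, (applyM (S.B i t) (S.z i t - xstar) - (g i (S.z i t) - g i xstar)) := by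
    simp only [applyM_sub, Finset.sum_sub_distrib, S.sum_applyM_succ, h.sum_eq_zero]
    abel
  calc ‖S.x (t + 1) - xstar‖ ≤ 2 * K ^ 2 * ((K ^ 2 * η + L * ε) * ρ) :=
        norm_le_of_sum_eq_sum_of_norm_sq_le_inner (by positivity)
          (fun i => norm_sq_le_inner_applyM_of_wNorm_le (h.isSymm i) (h.conj_eq_one i)
            (h.opNorm_le i) ((hB i).trans h.η_le) _)
          (fun i => h.norm_applyM_sub_sub_le hρ (hB i) (hz i)) hsum
    _ = 2 * K ^ 2 * (K ^ 2 * η + L * ε) * ρ := by ring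
    _ ≤ 1 / 2 * ρ := by gcongr; exact h.newton_le
    _ = ρ / 2 := by ring

/-- The local invariant of the iteration at time `t`: each update of a component has halved the
bound on its distance to `xstar`, and every potential is at most `η ^ 2`, which keeps the matrices
within weighted distance `η` of their targets. -/
def InBasin (H M : Fin n → Mat p) (xstar : Vec p) (η ε : ℝ) (t : ℕ) : Prop :=
  ∀ j, ‖S.z j t - xstar‖ ≤ ε * (1 / 2) ^ updateCount j t ∧ S.potential H M η j t ≤ η ^ 2

variable {S}

lemma InBasin.wNorm_le {t : ℕ} (hS : S.InBasin H M xstar η ε t) (hη : 0 ≤ η) (j : Fin n) :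
    wNorm (M j) (S.B j t - H j) ≤ η :=
  le_of_sq_le_sq ((S.wNorm_sq_le_potential j t).trans (hS j).2) hη

lemma InBasin.norm_z_cyc_succ_sub_le (h : IQNLocal g H M xstar K L η ε) {t : ℕ}
    (hS : S.InBasin H M xstar η ε t) :
    ‖S.z (cyc hn t) (t + 1) - xstar‖ ≤ ε * (1 / 2) ^ updateCount (cyc hn t) (t + 1) := by
  have hε := h.ε_pos
  rw [S.z_cyc_succ, updateCount_cyc_succ, pow_succ, ← mul_assoc, mul_one_div]
  refine S.norm_x_succ_sub_le h
    (mul_le_of_le_one_right hε.le (pow_le_one₀ (by norm_num) (by norm_num)))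
    (fun j => (hS j).1.trans ?_) (hS.wNorm_le h.η_pos.le)
  gcongr ε * ?_
  exact pow_le_pow_of_le_one (by norm_num) (by norm_num) (updateCount_cyc_le hn t j)

lemma InBasin.potential_cyc_succ_le (h : IQNLocal g H M xstar K L η ε) {t : ℕ}
    (hS : S.InBasin H M xstar η ε t) :
    K ^ 4 * S.potential H M η (cyc hn t) (t + 1) +
        1 / 3 * S.dennisMoreRatio H (cyc hn t) t ^ 2 ≤
      K ^ 4 * S.potential H M η (cyc hn t) t := by
  have hε := h.ε_pos
  have hzsucc : ‖S.z (cyc hn t) (t + 1) - xstar‖ ≤ ε * (1 / 2) ^ updateCount (cyc hn t) t :=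
    (hS.norm_z_cyc_succ_sub_le h).trans <| by
      rw [updateCount_cyc_succ]
      gcongr ε * ?_
      exact pow_le_pow_of_le_one (by norm_num) (by norm_num) (Nat.le_succ _)
  have hstep := h.wNorm_bfgsUpdate_sub_sq_le_add_drift (S.isSymm (cyc hn t) t)
    (hS.wNorm_le h.η_pos.le (cyc hn t)) (S.step_ne_zero t)
    (pow_le_one₀ (by norm_num) (by norm_num)) hzsucc (hS (cyc hn t)).1
  rw [potential, potential, dennisMoreRatio, S.B_cyc_succ, updateCount_cyc_succ,
    pow_succ (1 / 2 : ℝ)]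
  linarith

lemma InBasin.potential_succ_le (h : IQNLocal g H M xstar K L η ε) {t : ℕ}
    (hS : S.InBasin H M xstar η ε t) (j : Fin n) :
    S.potential H M η j (t + 1) ≤ S.potential H M η j t := by
  rcases eq_or_ne j (cyc hn t) with rfl | hj
  · refine le_of_mul_le_mul_left ?_ (pow_pos h.K_pos 4)
    exact (le_add_of_nonneg_right (by positivity)).trans (hS.potential_cyc_succ_le h)
  · exact (S.potential_succ_of_ne hj).le

lemma InBasin.succ (h : IQNLocal g H M xstar K L η ε) {t : ℕ}
    (hS : S.InBasin H M xstar η ε t) : S.InBasin H M xstar η ε (t + 1) := by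
  refine fun j => ⟨?_, (hS.potential_succ_le h j).trans (hS j).2⟩
  rcases eq_or_ne j (cyc hn t) with rfl | hj
  · exact hS.norm_z_cyc_succ_sub_le h
  · rw [S.z_succ_of_ne t j hj, updateCount_succ_of_ne hn hj]
    exact (hS j).1

lemma inBasin_zero (hx : ‖S.x 0 - xstar‖ ≤ ε) (hB : ∀ j, wNorm (M j) (S.B j 0 - H j) ≤ η / 2) :
    S.InBasin H M xstar η ε 0 := by
  refine fun j => ⟨by simpa [updateCount, S.z_zero] using hx, ?_⟩
  have hsq : wNorm (M j) (S.B j 0 - H j) ^ 2 ≤ (η / 2) ^ 2 :=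
    pow_le_pow_left₀ (Real.sqrt_nonneg _) (hB j) 2
  simp only [potential, updateCount, Nat.count_zero, pow_zero]
  nlinarith

lemma inBasin (h : IQNLocal g H M xstar K L η ε) (hx : ‖S.x 0 - xstar‖ ≤ ε)
    (hB : ∀ j, wNorm (M j) (S.B j 0 - H j) ≤ η / 2) (t : ℕ) : S.InBasin H M xstar η ε t :=
  Nat.rec (inBasin_zero hx hB) (fun _ => InBasin.succ h) t

lemma tendsto_dennisMoreRatio (h : IQNLocal g H M xstar K L η ε)
    (hS : ∀ t, S.InBasin H M xstar η ε t) (i : Fin n) :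
    Tendsto (fun k : ℕ => S.dennisMoreRatio H i (i.1 + k * n)) atTop (nhds 0) := by
  have hanti : Antitone (S.potential H M η i) :=
    antitone_nat_of_succ_le fun t => (hS t).potential_succ_le h i
  have hstep (k : ℕ) : K ^ 4 * S.potential H M η i (i.1 + (k + 1) * n) +
      1 / 3 * S.dennisMoreRatio H i (i.1 + k * n) ^ 2 ≤
        K ^ 4 * S.potential H M η i (i.1 + k * n) := by
    have hcyc := (hS (i.1 + k * n)).potential_cyc_succ_le h
    rw [cyc_add_mul hn i k] at hcyc
    refine le_trans ?_ hcyc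
    gcongr
    exact hanti (by rw [add_one_mul]; omega)
  have hsq := tendsto_zero_of_add_le
    (fun k => mul_nonneg (by positivity) (S.potential_nonneg i (i.1 + k * n)))
    (fun k => by positivity) hstep
  have hsqrt := (hsq.const_mul 3).sqrt
  simpa [← mul_assoc, Real.sqrt_sq (S.dennisMoreRatio_nonneg _ _)] using hsqrt

end IQNRun

end Run

section Problem

variable {p n : ℕ}

namespace IQNProblem

variable (P : IQNProblem p n)

lemma linearizesAt_gradient (i : Fin n) :
    LinearizesAt (gradient (P.f i)) (P.Hess i P.xstar) P.xstar P.Ltil := by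
  intro ρ u v hu hv
  refine (convex_closedBall P.xstar ρ).norm_image_sub_le_of_norm_hasFDerivWithin_le'
    (φ := toEuclideanCLM (𝕜 := ℝ) (P.Hess i P.xstar))
    (fun x _ => (P.hHess i x).hasFDerivWithinAt) (fun x hx => ?_)
    (mem_closedBall_iff_norm.2 hv) (mem_closedBall_iff_norm.2 hu)
  have hLip := P.hLip i x P.xstar
  rw [opNorm, map_sub] at hLip
  exact hLip.trans (mul_le_mul_of_nonneg_left (mem_closedBall_iff_norm.1 hx) P.hLtil.le)

lemma sum_gradient_xstar : ∑ i, gradient (P.f i) P.xstar = 0 := by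
  have hn : (n : ℝ)⁻¹ ≠ 0 := inv_ne_zero (Nat.cast_ne_zero.2 (Nat.one_le_iff_ne_zero.1 P.hn))
  have hgrad (i : Fin n) : HasGradientAt (P.f i) (gradient (P.f i) P.xstar) P.xstar :=
    ((P.hC2 i).differentiable two_ne_zero P.xstar).hasGradientAt
  have hmean : HasGradientAt (fun x => (n : ℝ)⁻¹ * ∑ i, P.f i x)
      ((n : ℝ)⁻¹ • ∑ i, gradient (P.f i) P.xstar) P.xstar := by
    rw [hasGradientAt_iff_hasFDerivAt, map_smul, map_sum]
    exact (HasFDerivAt.fun_sum fun i _ => (hgrad i).hasFDerivAt).const_mul _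
  exact (smul_eq_zero.1 (hmean.gradient.symm.trans P.hopt)).resolve_left hn

end IQNProblem

namespace IQNState

variable {P : IQNProblem p n} (S : IQNState P)

lemma sum_applyM_succ (t : ℕ) : ∑ i, applyM (S.B i t) (S.x (t + 1)) =
    ∑ i, applyM (S.B i t) (S.z i t) - ∑ i, gradient (P.f i) (S.z i t) := by
  have hn : (n : ℝ)⁻¹ ≠ 0 := inv_ne_zero (Nat.cast_ne_zero.2 (Nat.one_le_iff_ne_zero.1 P.hn))
  have hdet := (isUnit_iff_isUnit_det _).1 (S.hinv t)
  have hmean : applyM ((n : ℝ)⁻¹ • ∑ i, S.B i t) (S.x (t + 1)) =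
      (n : ℝ)⁻¹ • ∑ i, applyM (S.B i t) (S.x (t + 1)) := by
    simp only [applyM, map_smul, map_sum, _root_.smul_apply, _root_.sum_apply]
  refine smul_right_injective _ hn (hmean.symm.trans ?_)
  rw [S.hx, applyM_applyM_inv hdet]
  exact (smul_sub _ _ _).symm

/-- An IQN run for `P` as a run for the system of the component gradients. -/
def toRun : IQNRun P.hn fun i => gradient (P.f i) where
  x := S.x
  z := S.z
  B := S.B
  z_zero := S.hz0
  isSymm := S.hsym
  sum_applyM_succ := S.sum_applyM_succ
  z_cyc_succ := S.hzupd
  z_succ_of_ne := S.hzfix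
  step_ne_zero := S.hs
  B_cyc_succ := S.hBupd
  B_succ_of_ne := S.hBfix

end IQNState

end Problem

theorem stmt6_general {p n : ℕ} (hn : 1 ≤ n) (g : Fin n → Vec p → Vec p) (H M : Fin n → Mat p)
    (xstar : Vec p) (L : ℝ) (hL : 0 ≤ L) (hg : ∀ i, LinearizesAt (g i) (H i) xstar L)
    (hzero : ∑ i, g i xstar = 0) (hM : ∀ i, (M i).IsSymm ∧ M i * H i * M i = 1) :
    ∃ ε > (0 : ℝ), ∃ δ > (0 : ℝ), ∀ S : IQNRun hn g,
      ‖S.x 0 - xstar‖ < ε →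
      (∀ i, wNorm (M i) (S.B i 0 - H i) < δ) →
      ∀ i : Fin n, Tendsto (fun k : ℕ => S.dennisMoreRatio H i (i.1 + k * n)) atTop (nhds 0) := by
  obtain ⟨K, η, ε, h⟩ := exists_iqnLocal hL hg hzero hM
  refine ⟨ε, h.ε_pos, η / 2, half_pos h.η_pos, fun S hx hB => ?_⟩
  exact IQNRun.tendsto_dennisMoreRatio h (IQNRun.inBasin h hx.le fun j => (hB j).le)

/-- Proposition 1 of the paper: locally, for every `i` the Dennis–Moré
condition holds for `f_i` along its update steps `t_k = i + k·n` (the iterations at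
which the cyclic index equals `i`). -/
theorem stmt6 {p n : ℕ} (P : IQNProblem p n) (M : Fin n → Mat p)
    (hM : ∀ i, (M i).PosDef ∧ M i * P.Hess i P.xstar * M i = 1) :
    ∃ ε > (0:ℝ), ∃ δ > (0:ℝ), ∀ S : IQNState P,
      ‖S.x 0 - P.xstar‖ < ε →
      (∀ i, wNorm (M i) (S.B i 0 - P.Hess i P.xstar) < δ) →
      ∀ i : Fin n,
        Tendsto (fun k : ℕ =>
            ‖applyM (S.B i (i.1 + k*n) - P.Hess i P.xstar)
                (S.z i (i.1 + k*n + 1) - S.z i (i.1 + k*n))‖ /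
              ‖S.z i (i.1 + k*n + 1) - S.z i (i.1 + k*n)‖)
          atTop (nhds 0) := by
  obtain ⟨ε, hε, δ, hδ, h⟩ := stmt6_general P.hn (fun i => gradient (P.f i))
    (fun i => P.Hess i P.xstar) M P.xstar P.Ltil P.hLtil.le P.linearizesAt_gradient
    P.sum_gradient_xstar fun i => ⟨isHermitian_iff_isSymm.1 (hM i).1.isHermitian, (hM i).2⟩
  exact ⟨ε, hε, δ, hδ, fun S => h S.toRun⟩

end
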